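/- arXiv:0803.3469 — 2 statements merged into one kernel-verified Lean document; each statement's English description precedes it below -/
import Mathlib

section
/- The genus 4 ansatz Ξ^{(4)} = (1/16)(G₀^{(4)} − G₁^{(4)} + 2G₂^{(4)} − 8G₃^{(4)} + 64G₄^{(4)}) satisfies both factorization constraints: for every τ₁ ∈ ℍ₁ and τ₂ ∈ ℍ₃ one has Ξ^{(4)}(τ₁ ⊕ τ₂) = Ξ^{(1)}(τ₁) · Ξ^{(3)}(τ₂), and for every σ₁, σ₂ ∈ ℍ₂ one has Ξ^{(4)}(σ₁ ⊕ σ₂) = Ξ^{(2)}(σ₁) · Ξ^{(2)}(σ₂), where ⊕ denotes forming the block-diagonal period matrix. -/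
open scoped BigOperators

abbrev ThetaChar (g : ℕ) := (Fin g → ZMod 2) × (Fin g → ZMod 2)

/-- Theta constant with characteristic `v = [ε; δ]`. -/
noncomputable def theta {g : ℕ} (v : ThetaChar g) (τ : Matrix (Fin g) (Fin g) ℂ) : ℂ :=
  ∑' n : Fin g → ℤ,
    Complex.exp ((Real.pi : ℂ) * Complex.I *
      ((∑ i, ∑ j, ((n i : ℂ) + ((v.1 i).val : ℂ) / 2) * τ i j *
          ((n j : ℂ) + ((v.1 j).val : ℂ) / 2)) +
        ∑ i, ((n i : ℂ) + ((v.1 i).val : ℂ) / 2) * ((v.2 i).val : ℂ)))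

/-- Siegel upper half-space membership. -/
def IsSiegel {g : ℕ} (τ : Matrix (Fin g) (Fin g) ℂ) : Prop :=
  τ.IsSymm ∧ Matrix.PosDef (τ.map Complex.im)

noncomputable def Pset {g : ℕ} (M : Set (ThetaChar g)) (τ : Matrix (Fin g) (Fin g) ℂ) : ℂ :=
  ∏ᶠ v ∈ M, theta v τ

noncomputable def Pform (g i s : ℕ) (τ : Matrix (Fin g) (Fin g) ℂ) : ℂ :=
  ∑ᶠ V ∈ {V : Submodule (ZMod 2) (ThetaChar g) | Module.finrank (ZMod 2) ↥V = i},
    Pset (V : Set (ThetaChar g)) τ ^ s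

noncomputable def Nsub (n m i : ℕ) : ℕ :=
  Nat.card {V : Submodule (ZMod 2) ((Fin n → ZMod 2) × (Fin m → ZMod 2)) //
    Module.finrank (ZMod 2) ↥V = i ∧
    V.map (LinearMap.fst (ZMod 2) (Fin n → ZMod 2) (Fin m → ZMod 2)) = ⊤ ∧
    V.map (LinearMap.snd (ZMod 2) (Fin n → ZMod 2) (Fin m → ZMod 2)) = ⊤}

noncomputable def blockDiag {k l : ℕ} (τ₁ : Matrix (Fin k) (Fin k) ℂ)
    (τ₂ : Matrix (Fin l) (Fin l) ℂ) : Matrix (Fin (k + l)) (Fin (k + l)) ℂ :=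
  Matrix.reindex finSumFinEquiv finSumFinEquiv (Matrix.fromBlocks τ₁ 0 0 τ₂)

def chproj1 (k l : ℕ) : ThetaChar (k + l) →ₗ[ZMod 2] ThetaChar k :=
  (LinearMap.funLeft (ZMod 2) (ZMod 2) (Fin.castAdd l)).prodMap
    (LinearMap.funLeft (ZMod 2) (ZMod 2) (Fin.castAdd l))

def chproj2 (k l : ℕ) : ThetaChar (k + l) →ₗ[ZMod 2] ThetaChar l :=
  (LinearMap.funLeft (ZMod 2) (ZMod 2) (Fin.natAdd k)).prodMap
    (LinearMap.funLeft (ZMod 2) (ZMod 2) (Fin.natAdd k))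

def weil {g : ℕ} (v w : ThetaChar g) : ZMod 2 :=
  (∑ i, v.1 i * w.2 i) + (∑ i, v.2 i * w.1 i)

def evenChar {g : ℕ} (v : ThetaChar g) : Prop := (∑ i, v.1 i * v.2 i) = 0

def qform {g : ℕ} (Δ v : ThetaChar g) : ZMod 2 :=
  (∑ i, v.1 i * v.2 i) + (∑ i, Δ.1 i * v.2 i) + (∑ i, Δ.2 i * v.1 i)

noncomputable def Gform (g i : ℕ) (τ : Matrix (Fin g) (Fin g) ℂ) : ℂ :=
  Pform g i (2 ^ (4 - i)) τ

noncomputable def Xi1 (τ : Matrix (Fin 1) (Fin 1) ℂ) : ℂ :=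
  (1 / 2) * (Gform 1 0 τ - Gform 1 1 τ)

noncomputable def Xi2 (τ : Matrix (Fin 2) (Fin 2) ℂ) : ℂ :=
  (1 / 4) * (Gform 2 0 τ - Gform 2 1 τ + 2 * Gform 2 2 τ)

noncomputable def Xi3 (τ : Matrix (Fin 3) (Fin 3) ℂ) : ℂ :=
  (1 / 8) * (Gform 3 0 τ - Gform 3 1 τ + 2 * Gform 3 2 τ - 8 * Gform 3 3 τ)

noncomputable def Xi4 (τ : Matrix (Fin 4) (Fin 4) ℂ) : ℂ :=
  (1 / 16) * (Gform 4 0 τ - Gform 4 1 τ + 2 * Gform 4 2 τ - 8 * Gform 4 3 τ +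
    64 * Gform 4 4 τ)

/-!
The coefficients `1, -1, 2, -8, 64` are the values `(-1) ^ d * 2 ^ (d.choose 2)` of the Möbius
function of the lattice of subspaces of `𝔽₂ ^ {2g}`. A subspace on which
the parity form `ε · δ` vanishes has dimension at most `g`, so every larger subspace contains an odd
characteristic and contributes `0`; hence `Ξ` is a Möbius-weighted sum over all subspaces `V`.

At a block-diagonal period matrix each theta constant is a product, so the suitably normalized power
of `P_V` depends only on the two projections `(V₁, V₂)` of `V` and is the product of the
corresponding powers of `P_{V₁}` and `P_{V₂}`. The map `V ↦ (V₁, V₂)` is the lower adjoint of a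
Galois connection into the product lattice, so by Rota's theorem it pushes the Möbius function
forward to the Möbius function of the product, which is multiplicative.
-/

section Moebius

open IncidenceAlgebra Finset

variable (R : Type*) [Ring R] {α β : Type*}

section PartialOrder

variable [PartialOrder α] [OrderBot α] [LocallyFiniteOrder α] [DecidableEq α] [Fintype α]
  [PartialOrder β] [OrderBot β] [LocallyFiniteOrder β] [DecidableEq β]

/-- Rota's theorem comparing Möbius functions across a Galois connection. -/
lemma sum_mu_bot_filter_eq_of_galoisConnection {l : α → β} {u : β → α}
    (hlu : GaloisConnection l u) (b : β) :
    ∑ a with l a = b, mu R ⊥ a = ∑ c ∈ Iic b with u c = ⊥, mu R c b := by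
  classical
  have sum_le (c : β) :
      (if u c = ⊥ then 1 else 0 : R) = ∑ d ∈ Iic c, ∑ a with l a = d, mu R ⊥ a := by
    have filter_le : ({a | l a ∈ Iic c} : Finset α) = Icc ⊥ (u c) := by
      ext a
      simp [hlu.le_iff_le]
    rw [sum_fiberwise_eq_sum_filter, filter_le, sum_Icc_mu_right]
    simp only [eq_comm]
  rw [moebius_inversion_bot _ _ sum_le b, sum_filter]
  simp only [mul_ite, mul_one, mul_zero]

lemma sum_mu_bot_filter_eq_of_galoisConnection_of_eq_bot_iff {l : α → β} {u : β → α}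
    (hlu : GaloisConnection l u) (hu : ∀ c, u c = ⊥ ↔ c = ⊥) (b : β) :
    ∑ a with l a = b, mu R ⊥ a = mu R ⊥ b := by
  simp [sum_mu_bot_filter_eq_of_galoisConnection R hlu, hu, filter_eq']

end PartialOrder

/-- Weisner's theorem, which is Rota's for `x ↦ x ⊔ a` with values in the elements above `a`. -/
lemma sum_mu_bot_filter_sup_eq [SemilatticeSup α] [OrderBot α] [LocallyFiniteOrder α]
    [DecidableEq α] [Fintype α] {a : α} (ha : a ≠ ⊥) (b : α) :
    ∑ x with x ⊔ a = b, mu R ⊥ x = 0 := by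
  classical
  by_cases hab : a ≤ b
  · have gc : GaloisConnection (fun x ↦ (⟨x ⊔ a, le_sup_right⟩ : Set.Ici a)) Subtype.val :=
      fun _ y ↦ ⟨le_sup_left.trans, fun hxy ↦ sup_le hxy y.2⟩
    have val_ne_bot (y : Set.Ici a) : (y : α) ≠ ⊥ := fun hy ↦ ha (le_bot_iff.1 (hy ▸ y.2))
    simpa [Subtype.ext_iff, val_ne_bot] using
      sum_mu_bot_filter_eq_of_galoisConnection R gc ⟨b, hab⟩
  · exact sum_eq_zero fun x hx ↦ (hab ((mem_filter.1 hx).2 ▸ le_sup_right)).elim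

lemma mu_bot_eq_neg_sum_of_isAtom [Lattice α] [OrderBot α] [LocallyFiniteOrder α]
    [DecidableEq α] [Fintype α] {a b : α} [DecidablePred (Disjoint a)] (ha : IsAtom a)
    (hab : a ≤ b) :
    mu R ⊥ b = -∑ x with Disjoint a x ∧ a ⊔ x = b, mu R ⊥ x := by
  have filter_sup_eq : ({x | x ⊔ a = b} : Finset α) =
      insert b ({x | Disjoint a x ∧ a ⊔ x = b} : Finset α) := by
    ext x
    simp only [mem_filter_univ, mem_insert, ← ha.not_le_iff_disjoint, sup_comm a]
    grind [sup_eq_left]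
  have notMem : b ∉ ({x | Disjoint a x ∧ a ⊔ x = b} : Finset α) := by
    simp [← ha.not_le_iff_disjoint, hab]
  have weisner := sum_mu_bot_filter_sup_eq R ha.ne_bot b
  rw [filter_sup_eq, sum_insert notMem] at weisner
  exact eq_neg_of_add_eq_zero_left weisner

end Moebius

section Complements

variable {K E : Type*} [Field K] [AddCommGroup E] [Module K E]

lemma card_isCompl [Module.Finite K E] (L : Submodule K E) :
    Nat.card {W // IsCompl L W} =
      Nat.card K ^ (Module.finrank K L * (Module.finrank K E - Module.finrank K L)) := by
  obtain ⟨W₀, hW₀⟩ := L.exists_isCompl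
  have restrict_eq_id (f : (L →ₗ[K] L) × (W₀ →ₗ[K] L)) :
      (∀ x : L, LinearMap.ofIsComplProdEquiv hW₀ f x = x) ↔ f.1 = LinearMap.id := by
    simp [LinearMap.ofIsComplProdEquiv, LinearMap.ext_iff]
  let e : {W // IsCompl L W} ≃ (W₀ →ₗ[K] L) :=
    L.isComplEquivProj.trans <|
      ((LinearMap.ofIsComplProdEquiv hW₀).toEquiv.subtypeEquiv
        fun f ↦ (restrict_eq_id f).symm).symm.trans
      { toFun := fun f ↦ f.1.2
        invFun := fun g ↦ ⟨(LinearMap.id, g), rfl⟩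
        left_inv := fun f ↦ Subtype.ext (Prod.ext f.2.symm rfl)
        right_inv := fun _ ↦ rfl }
  have finrank_add := Submodule.finrank_add_eq_of_isCompl hW₀
  rw [Nat.card_congr e, Module.natCard_eq_pow_finrank (K := K), Module.finrank_linearMap,
    mul_comm, ← finrank_add, Nat.add_sub_cancel_left]

lemma card_disjoint_sup_eq [Module.Finite K E] {L V : Submodule K E} (hLV : L ≤ V) :
    Nat.card {W : Submodule K E // Disjoint L W ∧ L ⊔ W = V} =
      Nat.card K ^ (Module.finrank K L * (Module.finrank K V - Module.finrank K L)) := by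
  let L' : Submodule K V := V.mapIic.symm ⟨L, hLV⟩
  have finrank_L' : Module.finrank K L' = Module.finrank K L :=
    (Submodule.submoduleOfEquivOfLe hLV).finrank_eq
  let e : {W : Submodule K V // IsCompl L' W} ≃
      {W : Submodule K E // Disjoint L W ∧ L ⊔ W = V} :=
    (V.mapIic.toEquiv.subtypeEquiv fun W ↦ by
      rw [V.mapIic.isCompl_iff, Set.Iic.isCompl_iff, V.mapIic.apply_symm_apply]; rfl).trans
    (Equiv.subtypeSubtypeEquivSubtype fun h ↦ le_sup_right.trans h.2.le)
  rw [← Nat.card_congr e, card_isCompl, finrank_L']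

end Complements

section SubspaceLattice

open IncidenceAlgebra Finset

/-- The value of the Möbius function of the lattice of subspaces of a vector space over a field
with `q` elements on the interval from the zero subspace to a subspace of dimension `d`; for
`q = 2` these are the coefficients `1, -1, 2, -8, 64, …` of the ansatz. -/
def subspaceMoebius (R : Type*) [Ring R] (q d : ℕ) : R := (-1) ^ d * q ^ d.choose 2

lemma subspaceMoebius_succ (R : Type*) [Ring R] (q d : ℕ) :
    subspaceMoebius R q (d + 1) = -(q ^ d * subspaceMoebius R q d) := by
  simp only [subspaceMoebius, Nat.choose_succ_succ' d 1, Nat.choose_one_right, pow_succ, pow_add,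
    mul_neg, mul_one, neg_mul, neg_inj]
  rw [← mul_assoc, ← mul_assoc, ((Commute.neg_one_left (q ^ d : R)).pow_left d).eq]

variable (R : Type*) [Ring R] {K E : Type*} [Field K] [AddCommGroup E] [Module K E]

lemma finrank_add_one_of_disjoint_span_singleton [Module.Finite K E] {v : E} (hv : v ≠ 0)
    {V W : Submodule K E} (hW : Disjoint (K ∙ v) W ∧ (K ∙ v) ⊔ W = V) :
    Module.finrank K W + 1 = Module.finrank K V := by
  have finrank_sup := Submodule.finrank_sup_add_finrank_inf_eq (K ∙ v) W
  rw [hW.1.eq_bot, hW.2, finrank_bot, finrank_span_singleton hv] at finrank_sup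
  lia

theorem mu_bot_submodule [Finite E] [LocallyFiniteOrder (Submodule K E)]
    [DecidableEq (Submodule K E)] (V : Submodule K E) :
    mu R ⊥ V = subspaceMoebius R (Nat.card K) (Module.finrank K V) := by
  classical
  have := Fintype.ofFinite (Submodule K E)
  induction hd : Module.finrank K V generalizing V with
  | zero => simp [Submodule.finrank_eq_zero.1 hd, subspaceMoebius]
  | succ d ih =>
    obtain ⟨v, hvV, hv⟩ := V.ne_bot_iff.1 (by rintro rfl; simp at hd)
    have span_le : K ∙ v ≤ V := (Submodule.span_singleton_le_iff_mem v V).2 hvV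
    have mu_eq (W) (hW : W ∈ ({W | Disjoint (K ∙ v) W ∧ (K ∙ v) ⊔ W = V} : Finset _)) :
        mu R ⊥ W = subspaceMoebius R (Nat.card K) d :=
      ih W <| Nat.succ_injective <|
        (finrank_add_one_of_disjoint_span_singleton hv ((mem_filter_univ W).1 hW)).trans hd
    have card_eq := card_disjoint_sup_eq span_le
    rw [finrank_span_singleton hv, hd, one_mul, Nat.add_sub_cancel, Nat.card_eq_fintype_card,
      Fintype.card_subtype] at card_eq
    rw [mu_bot_eq_neg_sum_of_isAtom R (nonzero_span_atom v hv) span_le,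
      sum_congr rfl mu_eq, sum_const, card_eq, nsmul_eq_mul, Nat.cast_pow,
      subspaceMoebius_succ]

end SubspaceLattice

section Goursat

open IncidenceAlgebra Finset

variable {K E F G : Type*} [Field K] [AddCommGroup E] [Module K E]
  [AddCommGroup F] [Module K F] [AddCommGroup G] [Module K G]

lemma galoisConnection_map_prod_map (p : E →ₗ[K] F) (q : E →ₗ[K] G) :
    GaloisConnection (fun V : Submodule K E ↦ (V.map p, V.map q))
      (fun X ↦ X.1.comap p ⊓ X.2.comap q) := fun V X ↦ by
  simp only [Prod.le_def, Submodule.map_le_iff_le_comap, le_inf_iff]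

lemma comap_inf_comap_eq_bot_iff {p : E →ₗ[K] F} {q : E →ₗ[K] G}
    (hpq : Function.Bijective (p.prod q)) (X : Submodule K F × Submodule K G) :
    X.1.comap p ⊓ X.2.comap q = ⊥ ↔ X = ⊥ := by
  have comap_prod : X.1.comap p ⊓ X.2.comap q = (X.1.prod X.2).comap (p.prod q) := rfl
  rw [comap_prod, ← LinearMap.ker_eq_bot.2 hpq.injective, ← Submodule.comap_bot,
    (Submodule.comap_injective_of_surjective hpq.surjective).eq_iff, Submodule.prod_eq_bot_iff,
    Prod.ext_iff]
  rfl

lemma sum_subspaceMoebius_filter_map_eq (R : Type*) [Ring R] [Finite E]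
    [Fintype (Submodule K E)] [DecidableEq (Submodule K F)] [DecidableEq (Submodule K G)]
    {p : E →ₗ[K] F} {q : E →ₗ[K] G} (hpq : Function.Bijective (p.prod q))
    (X : Submodule K F × Submodule K G) :
    ∑ V : Submodule K E with (V.map p, V.map q) = X,
        subspaceMoebius R (Nat.card K) (Module.finrank K V) =
      subspaceMoebius R (Nat.card K) (Module.finrank K X.1) *
        subspaceMoebius R (Nat.card K) (Module.finrank K X.2) := by
  classical
  have : Finite (F × G) := .of_surjective _ hpq.surjective
  have : Finite F := .of_surjective _ (Prod.fst_surjective (β := G))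
  have : Finite G := .of_surjective _ (Prod.snd_surjective (α := F))
  have := Fintype.ofFinite (Submodule K F)
  have := Fintype.ofFinite (Submodule K G)
  let : LocallyFiniteOrder (Submodule K E) := Fintype.toLocallyFiniteOrder
  let : LocallyFiniteOrder (Submodule K F) := Fintype.toLocallyFiniteOrder
  let : LocallyFiniteOrder (Submodule K G) := Fintype.toLocallyFiniteOrder
  have pushforward := sum_mu_bot_filter_eq_of_galoisConnection_of_eq_bot_iff R
    (galoisConnection_map_prod_map p q) (comap_inf_comap_eq_bot_iff hpq) X
  rw [← mu_prod_mu, IncidenceAlgebra.prod_apply] at pushforward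
  simp only [← mu_bot_submodule R]
  exact pushforward

end Goursat

section Fibres

lemma prod_comp_of_surjective {A B F M : Type*} [AddGroup A] [AddGroup B] [Fintype A] [Fintype B]
    [FunLike F A B] [AddMonoidHomClass F A B] [CommMonoid M] {φ : F} (hφ : Function.Surjective φ)
    (h : B → M) : ∏ a, h (φ a) = (∏ b, h b) ^ Nat.card {a // φ a = 0} := by
  classical
  rw [Finset.prod_comp, Finset.image_univ_of_surjective hφ, ← Finset.prod_pow]
  refine Finset.prod_congr rfl fun b _ ↦ ?_
  rw [AddMonoidHom.card_fiber_eq_of_mem_range φ (hφ b) (hφ 0), Nat.card_eq_fintype_card,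
    Fintype.card_subtype]

lemma finprod_mem_submodule_comp {K E F M : Type*} [Field K] [AddCommGroup E] [Module K E]
    [Finite E] [AddCommGroup F] [Module K F] [CommMonoid M] (f : E →ₗ[K] F) (V : Submodule K E)
    (h : F → M) :
    ∏ᶠ v ∈ (V : Set E), h (f v) = (∏ᶠ w ∈ (V.map f : Set F), h w) ^
      Nat.card K ^ (Module.finrank K V - Module.finrank K (V.map f)) := by
  have surj : Function.Surjective (f.submoduleMap V) := f.submoduleMap_surjective V
  have : Finite (V.map f) := .of_surjective _ surj
  have := Fintype.ofFinite V
  have := Fintype.ofFinite (V.map f)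
  have finrank_ker : Module.finrank K (LinearMap.ker (f.submoduleMap V)) =
      Module.finrank K V - Module.finrank K (V.map f) := by
    rw [← LinearMap.finrank_range_add_finrank_ker (f.submoduleMap V),
      LinearMap.range_eq_top.2 surj, finrank_top, Nat.add_sub_cancel_left]
  have card_ker : Nat.card {v // f.submoduleMap V v = 0} =
      Nat.card K ^ (Module.finrank K V - Module.finrank K (V.map f)) :=
    finrank_ker ▸ Module.natCard_eq_pow_finrank (V := LinearMap.ker (f.submoduleMap V))
  rw [← finprod_set_coe_eq_finprod_mem, ← finprod_set_coe_eq_finprod_mem, ← card_ker,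
    finprod_eq_prod_of_fintype, finprod_eq_prod_of_fintype]
  exact prod_comp_of_surjective surj fun w ↦ h w

end Fibres

section Isotropic

variable {K E : Type*} [Field K] [AddCommGroup E] [Module K E]

lemma two_mul_finrank_le_of_isotropic [FiniteDimensional K E] {Q : QuadraticForm K E}
    (hQ : LinearMap.BilinForm.Nondegenerate Q.polarBilin) {V : Submodule K E}
    (hV : ∀ v ∈ V, Q v = 0) : 2 * Module.finrank K V ≤ Module.finrank K E := by
  have le_orthogonal : V ≤ LinearMap.BilinForm.orthogonal Q.polarBilin V := fun w hw v hv ↦ by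
    simp [QuadraticMap.polar, hV v hv, hV w hw, hV _ (V.add_mem hv hw)]
  have finrank_le := Submodule.finrank_mono le_orthogonal
  have := V.finrank_le
  rw [LinearMap.BilinForm.finrank_orthogonal hQ] at finrank_le
  lia

end Isotropic

section Parity

/-- The quadratic form `[ε; δ] ↦ ε · δ` on characteristics, whose zeros are the even ones. -/
def parityForm (g : ℕ) : QuadraticForm (ZMod 2) (ThetaChar g) :=
  LinearMap.BilinMap.toQuadraticMap
    ((dotProductBilin (ZMod 2) (ZMod 2)).compl₁₂ (LinearMap.fst _ _ _) (LinearMap.snd _ _ _))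

lemma parityForm_eq_zero_iff {g : ℕ} (v : ThetaChar g) : parityForm g v = 0 ↔ evenChar v := Iff.rfl

lemma nondegenerate_polarBilin_parityForm (g : ℕ) :
    LinearMap.BilinForm.Nondegenerate (parityForm g).polarBilin := by
  have polar_eq (v w : ThetaChar g) : (parityForm g).polarBilin v w = v.1 ⬝ᵥ w.2 + w.1 ⬝ᵥ v.2 := by
    simp [parityForm, LinearMap.BilinMap.polarBilin_toQuadraticMap]
  have refl : LinearMap.IsRefl (parityForm g).polarBilin := fun v w ↦ by simp [polar_eq, add_comm]
  refine refl.nondegenerate_iff_separatingLeft.2 fun v hv ↦ Prod.ext ?_ ?_ <;> ext i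
  · simpa [polar_eq] using hv (0, Pi.single i 1)
  · simpa [polar_eq] using hv (Pi.single i 1, 0)

lemma exists_not_evenChar_of_lt_finrank {g : ℕ} {V : Submodule (ZMod 2) (ThetaChar g)}
    (hV : g < Module.finrank (ZMod 2) V) : ∃ v ∈ V, ¬ evenChar v := by
  by_contra! all_even
  have finrank_le := two_mul_finrank_le_of_isotropic (nondegenerate_polarBilin_parityForm g)
    fun v hv ↦ (parityForm_eq_zero_iff v).2 (all_even v hv)
  have finrank_thetaChar : Module.finrank (ZMod 2) (ThetaChar g) = g + g := by simp
  lia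

end Parity

section Coercivity

lemma exists_pos_mul_norm_sq_le {E : Type*} [NormedAddCommGroup E] [NormedSpace ℝ E]
    [FiniteDimensional ℝ E] {f : E → ℝ} (hf : Continuous f)
    (f_smul : ∀ (r : ℝ) (x : E), f (r • x) = r ^ 2 * f x) (f_pos : ∀ x ≠ 0, 0 < f x) :
    ∃ c > 0, ∀ x, c * ‖x‖ ^ 2 ≤ f x := by
  have pos_on_sphere (x) (hx : x ∈ Metric.sphere (0 : E) 1) : 0 < f x :=
    f_pos x (ne_zero_of_mem_unit_sphere ⟨x, hx⟩)
  have := FiniteDimensional.proper_real E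
  obtain ⟨c, c_pos, le_f⟩ := (isCompact_sphere (0 : E) 1).exists_forall_le' hf.continuousOn
    pos_on_sphere
  refine ⟨c, c_pos, fun x ↦ ?_⟩
  obtain rfl | hx := eq_or_ne x 0
  · simpa using (f_smul 0 0).ge
  have norm_smul_unit : ‖x‖ • ‖x‖⁻¹ • x = x := smul_inv_smul₀ (norm_ne_zero_iff.2 hx) x
  calc c * ‖x‖ ^ 2 ≤ f (‖x‖⁻¹ • x) * ‖x‖ ^ 2 := by
        gcongr
        exact le_f _ (by simp [norm_smul, hx])
    _ = f x := by rw [mul_comm, ← f_smul, norm_smul_unit]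

lemma exists_pos_mul_sum_sq_le_of_posDef {ι : Type*} [Fintype ι] {Y : Matrix ι ι ℝ}
    (hY : Y.PosDef) : ∃ c > 0, ∀ x : ι → ℝ, c * ∑ i, x i ^ 2 ≤ x ⬝ᵥ Y.mulVec x := by
  obtain ⟨c, c_pos, le_form⟩ := exists_pos_mul_norm_sq_le
    (f := fun x : EuclideanSpace ℝ ι ↦ x.ofLp ⬝ᵥ Y.mulVec x.ofLp) (by fun_prop)
    (fun r x ↦ by
      simp only [WithLp.ofLp_smul, Matrix.mulVec_smul, dotProduct_smul, smul_dotProduct,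
        smul_eq_mul]
      ring)
    (fun x hx ↦ hY.dotProduct_mulVec_pos (by simpa using hx))
  exact ⟨c, c_pos, fun x ↦ by simpa [EuclideanSpace.norm_sq_eq] using le_form (.toLp 2 x)⟩

end Coercivity

section Summability

lemma summable_prod_pi {g : ℕ} {α : Type*} {f : Fin g → α → ℝ} (f_nonneg : ∀ i a, 0 ≤ f i a)
    (hf : ∀ i, Summable (f i)) : Summable fun a : Fin g → α ↦ ∏ i, f i (a i) := by
  induction g with
  | zero => exact .of_finite
  | succ g ih =>
    have tail := ih (fun i : Fin g ↦ f_nonneg i.succ) fun i ↦ hf i.succ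
    rw [← (Fin.consEquiv fun _ : Fin (g + 1) ↦ α).summable_iff]
    refine ((hf 0).mul_of_nonneg tail (f_nonneg 0)
      fun a ↦ Finset.prod_nonneg fun i _ ↦ f_nonneg _ _).congr fun a ↦ ?_
    simp [Fin.prod_univ_succ, Fin.consEquiv]

lemma summable_exp_neg_mul_add_sq {b : ℝ} (hb : 0 < b) (a : ℝ) :
    Summable fun n : ℤ ↦ Real.exp (-b * (n + a) ^ 2) := by
  have summable_jacobi := (summable_jacobiTheta₂_term_iff (Complex.I * (a * b / Real.pi : ℝ))
    (Complex.I * (b / Real.pi : ℝ))).2 (by rw [Complex.I_mul_im, Complex.ofReal_re]; positivity)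
  refine (summable_jacobi.norm.mul_left (Real.exp (-b * a ^ 2))).congr fun n ↦ ?_
  rw [norm_jacobiTheta₂_term, ← Real.exp_add]
  simp only [Complex.I_mul_im, Complex.ofReal_re]
  field_simp
  ring_nf

end Summability

section Theta

/-- The point `n + ε / 2` of the shifted lattice summed over by a theta constant. -/
noncomputable def thetaPoint {g : ℕ} (ε : Fin g → ZMod 2) (n : Fin g → ℤ) : Fin g → ℝ :=
  fun i ↦ n i + (ε i).val / 2

/-- The exponent `xᵀ τ x + xᵀ δ`, up to the factor `πi`, of a summand of a theta constant. -/
noncomputable def thetaExponent {g : ℕ} (τ : Matrix (Fin g) (Fin g) ℂ) (δ : Fin g → ZMod 2)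
    (x : Fin g → ℝ) : ℂ :=
  ∑ i, ∑ j, (x i : ℂ) * τ i j * x j + ∑ i, (x i : ℂ) * (δ i).val

/-- The summand of the theta constant with characteristic `v` at the lattice point `n`. -/
noncomputable def thetaSummand {g : ℕ} (v : ThetaChar g) (τ : Matrix (Fin g) (Fin g) ℂ)
    (n : Fin g → ℤ) : ℂ :=
  Complex.exp (Real.pi * Complex.I * thetaExponent τ v.2 (thetaPoint v.1 n))

variable {g : ℕ} (v : ThetaChar g) (τ : Matrix (Fin g) (Fin g) ℂ)

lemma theta_eq_tsum_thetaSummand : theta v τ = ∑' n, thetaSummand v τ n := by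
  simp only [theta, thetaSummand, thetaExponent, thetaPoint]
  push_cast
  rfl

lemma im_thetaExponent (δ : Fin g → ZMod 2) (x : Fin g → ℝ) :
    (thetaExponent τ δ x).im = x ⬝ᵥ (τ.map Complex.im).mulVec x := by
  simp [-ZMod.natCast_val, thetaExponent, dotProduct, Matrix.mulVec, Finset.mul_sum, mul_assoc]

lemma thetaExponent_neg (δ : Fin g → ZMod 2) (x : Fin g → ℝ) :
    thetaExponent τ δ (-x) = thetaExponent τ δ x - ∑ i, 2 * (x i : ℂ) * (δ i).val := by
  simp only [thetaExponent, Pi.neg_apply, Complex.ofReal_neg, neg_mul, mul_neg, neg_neg,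
    Finset.sum_neg_distrib, mul_assoc, ← Finset.mul_sum]
  ring

lemma thetaPoint_neg_sub (ε : Fin g → ZMod 2) (n : Fin g → ℤ) :
    thetaPoint ε (fun i ↦ -n i - (ε i).val) = -thetaPoint ε n := by
  ext i
  simp only [thetaPoint, Pi.neg_apply]
  push_cast
  ring

lemma norm_thetaSummand (n : Fin g → ℤ) : ‖thetaSummand v τ n‖ =
    Real.exp (-Real.pi * (thetaPoint v.1 n ⬝ᵥ (τ.map Complex.im).mulVec (thetaPoint v.1 n))) := by
  rw [thetaSummand, Complex.norm_exp, mul_assoc, Complex.re_ofReal_mul, Complex.I_mul_re,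
    im_thetaExponent, mul_neg, neg_mul]

variable {τ} in
lemma summable_norm_thetaSummand (hτ : (τ.map Complex.im).PosDef) :
    Summable fun n ↦ ‖thetaSummand v τ n‖ := by
  obtain ⟨c, c_pos, le_form⟩ := exists_pos_mul_sum_sq_le_of_posDef hτ
  have summable_gaussians := summable_prod_pi (fun (i : Fin g) (n : ℤ) ↦ Real.exp_nonneg _)
    fun i ↦ summable_exp_neg_mul_add_sq (mul_pos Real.pi_pos c_pos) ((v.1 i).val / 2)
  refine .of_nonneg_of_le (fun _ ↦ norm_nonneg _) (fun n ↦ ?_) summable_gaussians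
  rw [← Real.exp_sum, norm_thetaSummand, Real.exp_le_exp, ← Finset.mul_sum, ← neg_mul, mul_assoc]
  exact mul_le_mul_of_nonpos_left (le_form _) (by simp [Real.pi_nonneg])

lemma thetaSummand_reflect_of_not_evenChar (hv : ¬ evenChar v) (n : Fin g → ℤ) :
    thetaSummand v τ (fun i ↦ -n i - (v.1 i).val) = -thetaSummand v τ n := by
  have odd_pairing : Odd (∑ i, (2 * n i + (v.1 i).val) * ((v.2 i).val : ℤ)) := by
    rw [← Int.not_even_iff_odd, ← ZMod.intCast_eq_zero_iff_even]
    simpa [evenChar, CharTwo.two_eq_zero] using hv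
  have two_mul_thetaPoint : ∑ i, 2 * (thetaPoint v.1 n i : ℂ) * (v.2 i).val =
      (∑ i, (2 * n i + (v.1 i).val) * ((v.2 i).val : ℤ) : ℤ) := by
    push_cast
    exact Finset.sum_congr rfl fun i _ ↦ by rw [thetaPoint]; push_cast; ring
  rw [thetaSummand, thetaPoint_neg_sub, thetaExponent_neg, two_mul_thetaPoint, mul_sub,
    Complex.exp_sub, mul_comm (_ * _) ((_ : ℤ) : ℂ), Complex.exp_int_mul, Complex.exp_pi_mul_I,
    odd_pairing.neg_one_zpow, div_neg, div_one, thetaSummand]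

lemma theta_eq_zero_of_not_evenChar (hv : ¬ evenChar v) : theta v τ = 0 := by
  have reflect_involutive : Function.Involutive fun (n : Fin g → ℤ) i ↦ -n i - ((v.1 i).val : ℤ) :=
    fun n ↦ by simp
  have theta_eq_neg : theta v τ = -theta v τ := by
    simp only [theta_eq_tsum_thetaSummand]
    conv_lhs => rw [← reflect_involutive.toPerm.tsum_eq]
    rw [← tsum_neg]
    exact tsum_congr (thetaSummand_reflect_of_not_evenChar v τ hv)
  exact self_eq_neg.1 theta_eq_neg

end Theta

section BlockDiagonal

variable {k l : ℕ} (τ₁ : Matrix (Fin k) (Fin k) ℂ) (τ₂ : Matrix (Fin l) (Fin l) ℂ)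

lemma thetaExponent_blockDiag (δ : Fin (k + l) → ZMod 2) (x : Fin (k + l) → ℝ) :
    thetaExponent (blockDiag τ₁ τ₂) δ x =
      thetaExponent τ₁ (δ ∘ Fin.castAdd l) (x ∘ Fin.castAdd l) +
        thetaExponent τ₂ (δ ∘ Fin.natAdd k) (x ∘ Fin.natAdd k) := by
  simp only [thetaExponent, blockDiag, Matrix.reindex_apply, Matrix.submatrix_apply,
    Fin.sum_univ_add, finSumFinEquiv_symm_apply_castAdd, finSumFinEquiv_symm_apply_natAdd,
    Matrix.fromBlocks_apply₁₁, Matrix.fromBlocks_apply₁₂, Matrix.fromBlocks_apply₂₁,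
    Matrix.fromBlocks_apply₂₂, Matrix.zero_apply, mul_zero, zero_mul, Finset.sum_const_zero,
    add_zero, zero_add, Function.comp_apply]
  ring

lemma thetaSummand_blockDiag_append (v : ThetaChar (k + l)) (n : Fin k → ℤ) (m : Fin l → ℤ) :
    thetaSummand v (blockDiag τ₁ τ₂) (Fin.append n m) =
      thetaSummand (chproj1 k l v) τ₁ n * thetaSummand (chproj2 k l v) τ₂ m := by
  have point_left : thetaPoint v.1 (Fin.append n m) ∘ Fin.castAdd l =
      thetaPoint (chproj1 k l v).1 n := by
    ext i
    simp [thetaPoint, chproj1, LinearMap.funLeft_apply]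
  have point_right : thetaPoint v.1 (Fin.append n m) ∘ Fin.natAdd k =
      thetaPoint (chproj2 k l v).1 m := by
    ext i
    simp [thetaPoint, chproj2, LinearMap.funLeft_apply]
  rw [thetaSummand, thetaExponent_blockDiag, point_left, point_right, mul_add, Complex.exp_add]
  rfl

variable {τ₁ τ₂} in
lemma theta_blockDiag (hτ₁ : (τ₁.map Complex.im).PosDef) (hτ₂ : (τ₂.map Complex.im).PosDef)
    (v : ThetaChar (k + l)) :
    theta v (blockDiag τ₁ τ₂) = theta (chproj1 k l v) τ₁ * theta (chproj2 k l v) τ₂ := by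
  simp only [theta_eq_tsum_thetaSummand]
  rw [tsum_mul_tsum_of_summable_norm (summable_norm_thetaSummand _ hτ₁)
    (summable_norm_thetaSummand _ hτ₂), ← (Fin.appendEquiv k l).tsum_eq]
  exact tsum_congr fun p ↦ thetaSummand_blockDiag_append τ₁ τ₂ v p.1 p.2

end BlockDiagonal

section Ansatz

open Module Finset

noncomputable instance (g : ℕ) : Fintype (Submodule (ZMod 2) (ThetaChar g)) := .ofFinite _

/-- The product `P_V` raised to the power making its weight `2 ^ (N - 1)` for every subspace `V`
of dimension at most `N`; the ansatz of the theorem has `N = 4`. -/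
noncomputable def Ppow (N : ℕ) {g : ℕ} (V : Submodule (ZMod 2) (ThetaChar g))
    (τ : Matrix (Fin g) (Fin g) ℂ) : ℂ :=
  Pset (V : Set (ThetaChar g)) τ ^ 2 ^ (N - finrank (ZMod 2) V)

/-- The genus `g` ansatz of weight `2 ^ (N - 1)`, whose instances for `N = 4` are `Xi1`, `Xi2`,
`Xi3` and `Xi4`. -/
noncomputable def Xi (N g : ℕ) (τ : Matrix (Fin g) (Fin g) ℂ) : ℂ :=
  (1 / 2 ^ g) * ∑ i ∈ range (g + 1), subspaceMoebius ℂ 2 i * Pform g i (2 ^ (N - i)) τ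

variable {g k l : ℕ}

lemma Pset_eq_zero_of_lt_finrank {V : Submodule (ZMod 2) (ThetaChar g)}
    (hV : g < finrank (ZMod 2) V) (τ : Matrix (Fin g) (Fin g) ℂ) :
    Pset (V : Set (ThetaChar g)) τ = 0 := by
  obtain ⟨v, hvV, hv⟩ := exists_not_evenChar_of_lt_finrank hV
  rw [Pset, finprod_mem_eq_finite_toFinset_prod _ (Set.toFinite _)]
  exact prod_eq_zero (by simpa using hvV) (theta_eq_zero_of_not_evenChar v τ hv)

lemma Ppow_eq_zero_iff (N : ℕ) (V : Submodule (ZMod 2) (ThetaChar g))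
    (τ : Matrix (Fin g) (Fin g) ℂ) : Ppow N V τ = 0 ↔ Pset (V : Set (ThetaChar g)) τ = 0 :=
  pow_eq_zero_iff (by positivity)

lemma Pform_eq_sum_Ppow (N i : ℕ) (τ : Matrix (Fin g) (Fin g) ℂ) :
    Pform g i (2 ^ (N - i)) τ =
      ∑ V with finrank (ZMod 2) (V : Submodule (ZMod 2) (ThetaChar g)) = i, Ppow N V τ := by
  rw [Pform, finsum_mem_eq_finite_toFinset_sum _ (Set.toFinite _)]
  refine sum_congr (by ext; simp) fun V hV ↦ ?_
  rw [Ppow, (mem_filter_univ V).1 hV]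

lemma Xi_eq_sum_Ppow (N : ℕ) (τ : Matrix (Fin g) (Fin g) ℂ) :
    Xi N g τ = (1 / 2 ^ g) * ∑ V : Submodule (ZMod 2) (ThetaChar g),
      subspaceMoebius ℂ 2 (finrank (ZMod 2) V) * Ppow N V τ := by
  have dimension_stratum (i : ℕ) : subspaceMoebius ℂ 2 i * Pform g i (2 ^ (N - i)) τ =
      ∑ V with finrank (ZMod 2) (V : Submodule (ZMod 2) (ThetaChar g)) = i,
        subspaceMoebius ℂ 2 (finrank (ZMod 2) V) * Ppow N V τ := by
    rw [Pform_eq_sum_Ppow, mul_sum]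
    exact sum_congr rfl fun V hV ↦ by rw [(mem_filter_univ V).1 hV]
  simp only [Xi, dimension_stratum, sum_fiberwise_eq_sum_filter]
  congr 1
  refine sum_filter_of_ne fun V _ hV ↦ mem_range_succ_iff.2 <| le_of_not_gt fun hgV ↦ hV ?_
  rw [(Ppow_eq_zero_iff N V τ).2 (Pset_eq_zero_of_lt_finrank hgV τ), mul_zero]

lemma bijective_chproj1_prod_chproj2 (k l : ℕ) :
    Function.Bijective ((chproj1 k l).prod (chproj2 k l)) :=
  (((Fin.appendEquiv k l).prodCongr (Fin.appendEquiv k l)).symm.trans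
    (.prodProdProdComm _ _ _ _)).bijective

variable {τ₁ : Matrix (Fin k) (Fin k) ℂ} {τ₂ : Matrix (Fin l) (Fin l) ℂ}

lemma Pset_blockDiag (hτ₁ : (τ₁.map Complex.im).PosDef) (hτ₂ : (τ₂.map Complex.im).PosDef)
    (V : Submodule (ZMod 2) (ThetaChar (k + l))) :
    Pset (V : Set (ThetaChar (k + l))) (blockDiag τ₁ τ₂) =
      Pset (V.map (chproj1 k l) : Set (ThetaChar k)) τ₁ ^
        2 ^ (finrank (ZMod 2) V - finrank (ZMod 2) (V.map (chproj1 k l))) *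
      Pset (V.map (chproj2 k l) : Set (ThetaChar l)) τ₂ ^
        2 ^ (finrank (ZMod 2) V - finrank (ZMod 2) (V.map (chproj2 k l))) := by
  have fibres₁ := finprod_mem_submodule_comp (chproj1 k l) V (theta · τ₁)
  have fibres₂ := finprod_mem_submodule_comp (chproj2 k l) V (theta · τ₂)
  rw [Nat.card_zmod] at fibres₁ fibres₂
  simp only [Pset, theta_blockDiag hτ₁ hτ₂]
  rw [finprod_mem_mul_distrib (Set.toFinite _), fibres₁, fibres₂]

lemma Ppow_blockDiag {N : ℕ} (hN : k + l ≤ N) (hτ₁ : (τ₁.map Complex.im).PosDef)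
    (hτ₂ : (τ₂.map Complex.im).PosDef) (V : Submodule (ZMod 2) (ThetaChar (k + l))) :
    Ppow N V (blockDiag τ₁ τ₂) =
      Ppow N (V.map (chproj1 k l)) τ₁ * Ppow N (V.map (chproj2 k l)) τ₂ := by
  have Pset_eq := Pset_blockDiag hτ₁ hτ₂ V
  obtain hV | hV := le_or_gt (finrank (ZMod 2) V) N
  · have exponent_add {d : ℕ} (hd : d ≤ finrank (ZMod 2) V) :
        2 ^ (finrank (ZMod 2) V - d) * 2 ^ (N - finrank (ZMod 2) V) = 2 ^ (N - d) := by
      rw [← pow_add, add_comm, Nat.sub_add_sub_cancel hV hd]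
    rw [Ppow, Pset_eq, mul_pow, ← pow_mul, ← pow_mul,
      exponent_add (Submodule.finrank_map_le _ V), exponent_add (Submodule.finrank_map_le _ V)]
    rfl
  · have Pset_eq_zero := Pset_eq_zero_of_lt_finrank (hN.trans_lt hV) (blockDiag τ₁ τ₂)
    -- The exponent `N - finrank V` is truncated here, but both sides vanish.
    rw [(Ppow_eq_zero_iff N V _).2 Pset_eq_zero, eq_comm, mul_eq_zero, Ppow_eq_zero_iff,
      Ppow_eq_zero_iff]
    rw [Pset_eq, mul_eq_zero] at Pset_eq_zero
    exact Pset_eq_zero.imp eq_zero_of_pow_eq_zero eq_zero_of_pow_eq_zero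

lemma Xi1_eq_Xi (τ : Matrix (Fin 1) (Fin 1) ℂ) : Xi1 τ = Xi 4 1 τ := by
  simp only [Xi1, Xi, Gform, subspaceMoebius, sum_range_succ, range_zero, sum_empty, Nat.choose]
  ring

lemma Xi2_eq_Xi (τ : Matrix (Fin 2) (Fin 2) ℂ) : Xi2 τ = Xi 4 2 τ := by
  simp only [Xi2, Xi, Gform, subspaceMoebius, sum_range_succ, range_zero, sum_empty, Nat.choose]
  ring

lemma Xi3_eq_Xi (τ : Matrix (Fin 3) (Fin 3) ℂ) : Xi3 τ = Xi 4 3 τ := by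
  simp only [Xi3, Xi, Gform, subspaceMoebius, sum_range_succ, range_zero, sum_empty, Nat.choose]
  ring

lemma Xi4_eq_Xi (τ : Matrix (Fin 4) (Fin 4) ℂ) : Xi4 τ = Xi 4 4 τ := by
  simp only [Xi4, Xi, Gform, subspaceMoebius, sum_range_succ, range_zero, sum_empty, Nat.choose]
  ring

theorem Xi4_factorization_general {N : ℕ} (hN : k + l ≤ N)
    (hτ₁ : (τ₁.map Complex.im).PosDef) (hτ₂ : (τ₂.map Complex.im).PosDef) :
    Xi N (k + l) (blockDiag τ₁ τ₂) = Xi N k τ₁ * Xi N l τ₂ := by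
  classical
  have sum_fibre (X : Submodule (ZMod 2) (ThetaChar k) × Submodule (ZMod 2) (ThetaChar l)) :
      ∑ V : Submodule (ZMod 2) (ThetaChar (k + l)) with
          (V.map (chproj1 k l), V.map (chproj2 k l)) = X,
        subspaceMoebius ℂ 2 (finrank (ZMod 2) V) * Ppow N V (blockDiag τ₁ τ₂) =
      subspaceMoebius ℂ 2 (finrank (ZMod 2) X.1) * Ppow N X.1 τ₁ *
        (subspaceMoebius ℂ 2 (finrank (ZMod 2) X.2) * Ppow N X.2 τ₂) := by
    have moebius_sum := sum_subspaceMoebius_filter_map_eq ℂ (bijective_chproj1_prod_chproj2 k l) X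
    rw [Nat.card_zmod] at moebius_sum
    rw [mul_mul_mul_comm, ← moebius_sum, sum_mul]
    refine sum_congr rfl fun V hV ↦ ?_
    obtain rfl := (mem_filter_univ V).1 hV
    rw [Ppow_blockDiag hN hτ₁ hτ₂]
  rw [Xi_eq_sum_Ppow, Xi_eq_sum_Ppow, Xi_eq_sum_Ppow, mul_mul_mul_comm, sum_mul_sum,
    ← Fintype.sum_prod_type', pow_add, one_div_mul_one_div]
  congr 1
  rw [← sum_fiberwise univ fun V ↦ (V.map (chproj1 k l), V.map (chproj2 k l))]
  exact sum_congr rfl fun X _ ↦ sum_fibre X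

end Ansatz

theorem Xi4_factorization :
    (∀ (τ₁ : Matrix (Fin 1) (Fin 1) ℂ) (τ₂ : Matrix (Fin 3) (Fin 3) ℂ),
      IsSiegel τ₁ → IsSiegel τ₂ → Xi4 (blockDiag τ₁ τ₂) = Xi1 τ₁ * Xi3 τ₂) ∧
    (∀ σ₁ σ₂ : Matrix (Fin 2) (Fin 2) ℂ,
      IsSiegel σ₁ → IsSiegel σ₂ → Xi4 (blockDiag σ₁ σ₂) = Xi2 σ₁ * Xi2 σ₂) := by
  simp only [Xi1_eq_Xi, Xi2_eq_Xi, Xi3_eq_Xi, Xi4_eq_Xi]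
  exact ⟨fun _ _ h₁ h₂ ↦ Xi4_factorization_general (k := 1) (l := 3) le_rfl h₁.2 h₂.2,
    fun _ _ h₁ h₂ ↦ Xi4_factorization_general (k := 2) (l := 2) le_rfl h₁.2 h₂.2⟩
end

section
/- Let Δ be an even characteristic in 𝔽₂^{2g} and let V be an 𝔽₂-linear subspace of 𝔽₂^{2g} such that every element of the coset V + Δ is an even characteristic. Then V is totally isotropic for the Weil symplectic pairing: ⟨v,w⟩ = 0 for all v, w ∈ V. -/
open scoped BigOperators

namespace ThetaChar

/-- The quadratic form `[ε; δ] ↦ ε · δ` on characteristics, whose zeros are the even ones. It is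
the diagonal of the bilinear form `([α; β], [ε; δ]) ↦ α · δ`. -/
def parityForm (g : ℕ) : QuadraticForm (ZMod 2) (ThetaChar g) :=
  LinearMap.BilinMap.toQuadraticMap <|
    (dotProductBilin (ZMod 2) (ZMod 2)).compl₁₂
      (LinearMap.fst (ZMod 2) (Fin g → ZMod 2) (Fin g → ZMod 2))
      (LinearMap.snd (ZMod 2) (Fin g → ZMod 2) (Fin g → ZMod 2))

variable {g : ℕ}

theorem evenChar_iff_parityForm_eq_zero (v : ThetaChar g) :
    evenChar v ↔ parityForm g v = 0 :=
  Iff.rfl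

theorem polar_parityForm (v w : ThetaChar g) :
    QuadraticMap.polar (parityForm g) v w = weil v w :=
  calc
    QuadraticMap.polar (parityForm g) v w = v.1 ⬝ᵥ w.2 + w.1 ⬝ᵥ v.2 :=
      LinearMap.BilinMap.polar_toQuadraticMap v w
    _ = v.1 ⬝ᵥ w.2 + v.2 ⬝ᵥ w.1 := by rw [dotProduct_comm w.1]

end ThetaChar

section Translate

variable {R M N : Type*} [CommRing R] [AddCommGroup M] [AddCommGroup N] [Module R M] [Module R N]

/-- As `Q` has degree two, its second difference is the same at every base point `Δ`; at the base
point `0` it is the polar form. -/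
theorem polar_eq_alternating_sum_translates (Q : QuadraticMap R M N) (Δ v w : M) :
    QuadraticMap.polar Q v w = Q (v + w + Δ) - Q (v + Δ) - Q (w + Δ) + Q Δ := by
  have cube := Q.map_add_add_add_map v w Δ
  rw [add_comm Δ v] at cube
  rw [QuadraticMap.polar, eq_sub_of_add_eq cube]
  abel

theorem purely_even_coset_isotropic_general {S : Type*} [SetLike S M] [AddMemClass S M]
    (Q : QuadraticMap R M N) (Δ : M) (V : S) (hQ : ∀ v ∈ V, Q (v + Δ) = Q Δ) :
    ∀ v ∈ V, ∀ w ∈ V, QuadraticMap.polar Q v w = 0 := by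
  intro v hv w hw
  rw [polar_eq_alternating_sum_translates Q Δ, hQ _ (add_mem hv hw), hQ v hv, hQ w hw]
  abel

end Translate

theorem purely_even_coset_isotropic (g : ℕ) (Δ : ThetaChar g) (hΔ : evenChar Δ)
    (V : Submodule (ZMod 2) (ThetaChar g))
    (h : ∀ v ∈ V, evenChar (v + Δ)) :
    ∀ v ∈ V, ∀ w ∈ V, weil v w = 0 := by
  simp only [ThetaChar.evenChar_iff_parityForm_eq_zero, ← ThetaChar.polar_parityForm] at hΔ h ⊢
  exact purely_even_coset_isotropic_general _ Δ V fun v hv => (h v hv).trans hΔ.symm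
end
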